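/- Let f : V → ℂ, let v ∈ V_+ (so v has q_+ + 1 neighbors), and let n ≥ 1. Set q' = q_+ if n is even and q' = q_- if n is odd. Then M_n(M_1 f)(v) = (1/(q'+1))·M_{n−1} f(v) + (q'/(q'+1))·M_{n+1} f(v). -/

import Mathlib

open scoped BigOperators ComplexOrder

/-- A semi-homogeneous tree `T_{q_+,q_-}`: a connected acyclic simple graph with a
parity function `eps` (true = `+`, false = `−`) that flips across edges, in which every
vertex of parity `+` has exactly `qp + 1` neighbors and every vertex of parity `−` has
exactly `qm + 1` neighbors.  Spheres are finite (this follows from local finiteness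
and connectedness, and is recorded as a field for convenience). -/
structure SemiHomTree (qp qm : ℕ) (V : Type) where
  G : SimpleGraph V
  connected : G.Connected
  acyclic : G.IsAcyclic
  eps : V → Bool
  adj_parity : ∀ ⦃v w : V⦄, G.Adj v w → eps w = !eps v
  nbr_finite : ∀ v : V, {w : V | G.Adj v w}.Finite
  degree_plus : ∀ v : V, eps v = true → {w : V | G.Adj v w}.ncard = qp + 1
  degree_minus : ∀ v : V, eps v = false → {w : V | G.Adj v w}.ncard = qm + 1
  sphere_finite : ∀ (v : V) (n : ℕ), {w : V | G.dist v w = n}.Finite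

/-- The averaging operator `M_n`: average of `f` over the sphere of radius `n` around `v`. -/
noncomputable def Mop {qp qm : ℕ} {V : Type} (T : SemiHomTree qp qm V)
    (n : ℕ) (f : V → ℂ) (v : V) : ℂ :=
  (({w : V | T.G.dist v w = n}.ncard : ℂ))⁻¹ * ∑ᶠ w ∈ {w : V | T.G.dist v w = n}, f w

/-- The Laplace operator `μ₁`: the average of `f` over the neighbors of `v`. -/
noncomputable def lap {qp qm : ℕ} {V : Type} (T : SemiHomTree qp qm V)
    (f : V → ℂ) (v : V) : ℂ :=
  (((if T.eps v then qp else qm : ℕ) : ℂ) + 1)⁻¹ * ∑ᶠ w ∈ {w : V | T.G.Adj v w}, f w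

/-!
Root the tree at `v`. A vertex `u` at distance `n ≥ 1` from `v` has one neighbour closer to `v`,
its parent, and `q'` neighbours farther away, its children, so `M₁ f u` is the value of `f` at the
parent plus `q'` times the average of `f` over the children, divided by `q' + 1`. Average this over
the sphere of radius `n`. Within each sphere all vertices have the same number of children, so the
parent of a uniform vertex of the sphere of radius `n` is uniform in the sphere of radius `n - 1`,
and a uniform child of a uniform vertex is uniform in the sphere of radius `n + 1`.
-/

open Finset

section Fibers

variable {ι κ M : Type*} [DecidableEq κ] [AddCommMonoid M] [Module ℚ≥0 M]
  {s : Finset ι} {t : Finset κ} {g : ι → κ} {k : ℕ}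

theorem expect_expect_fiber_of_card_fiber_eq (hg : Set.MapsTo g s t)
    (hk : ∀ j ∈ t, #{i ∈ s | g i = j} = k) (f : ι → M) :
    𝔼 j ∈ t, 𝔼 i ∈ s with g i = j, f i = 𝔼 i ∈ s, f i := by
  have card_eq : #s = #t * k := by
    rw [card_eq_sum_card_fiberwise hg, sum_congr rfl hk, sum_const, smul_eq_mul]
  calc
    𝔼 j ∈ t, 𝔼 i ∈ s with g i = j, f i
      = (#t : ℚ≥0)⁻¹ • ∑ j ∈ t, (k : ℚ≥0)⁻¹ • ∑ i ∈ s with g i = j, f i := by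
        simp only [expect]
        rw [sum_congr rfl fun j hj ↦ by rw [hk j hj]]
    _ = 𝔼 i ∈ s, f i := by
        rw [← smul_sum, sum_fiberwise_of_maps_to hg, smul_smul, expect, card_eq, Nat.cast_mul,
          mul_inv]

theorem expect_comp_of_card_fiber_eq (hg : Set.MapsTo g s t)
    (hk : ∀ j ∈ t, #{i ∈ s | g i = j} = k) (hs : s.Nonempty) (f : κ → M) :
    𝔼 i ∈ s, f (g i) = 𝔼 j ∈ t, f j := by
  have fiber_nonempty : ∀ j ∈ t, {i ∈ s | g i = j}.Nonempty := by
    obtain ⟨i, hi⟩ := hs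
    have k_pos : 0 < k := hk _ (hg hi) ▸ card_pos.2 ⟨i, mem_filter.2 ⟨hi, rfl⟩⟩
    exact fun j hj ↦ card_pos.1 (k_pos.trans_eq (hk j hj).symm)
  rw [← expect_expect_fiber_of_card_fiber_eq hg hk]
  refine expect_congr rfl fun j hj ↦ ?_
  rw [expect_congr rfl fun i hi ↦ by rw [(mem_filter.1 hi).2], expect_const (fiber_nonempty j hj)]

end Fibers

section RootedTree

variable {V : Type*} {G : SimpleGraph V} {r u w w' : V}

theorem ne_of_dist_eq_add_one {n : ℕ} (h : G.dist r u = n + 1) : u ≠ r := by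
  rintro rfl
  simp at h

theorem exists_adj_dist_eq_dist_add_one (hG : G.Connected) (hu : u ≠ r) :
    ∃ w, G.Adj u w ∧ G.dist r u = G.dist r w + 1 := by
  obtain ⟨p, hp⟩ := hG.exists_walk_length_eq_dist u r
  cases p with
  | nil => exact absurd rfl hu
  | @cons _ w _ h p =>
    refine ⟨w, h, ?_⟩
    have dist_le : G.dist w r ≤ p.length := SimpleGraph.dist_le p
    have dist_triangle : G.dist u r ≤ G.dist u w + G.dist w r := hG.dist_triangle
    rw [SimpleGraph.dist_eq_one_iff_adj.2 h] at dist_triangle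
    rw [SimpleGraph.Walk.length_cons] at hp
    rw [G.dist_comm (u := r), G.dist_comm (u := r)]
    lia

theorem eq_of_adj_of_dist_eq_dist_add_one (hG : G.IsTree) (h : G.Adj u w)
    (hd : G.dist r u = G.dist r w + 1) (h' : G.Adj u w') (hd' : G.dist r u = G.dist r w' + 1) :
    w = w' := by
  have exists_isPath_cons {x : V} (hx : G.Adj u x) (hdx : G.dist r u = G.dist r x + 1) :
      ∃ p : G.Walk x r, (p.cons hx).IsPath := by
    obtain ⟨p, hp⟩ := hG.connected.exists_walk_length_eq_dist x r
    refine ⟨p, (p.cons hx).isPath_of_length_eq_dist ?_⟩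
    rw [SimpleGraph.Walk.length_cons, hp, G.dist_comm, ← hdx, G.dist_comm]
  obtain ⟨p, hp⟩ := exists_isPath_cons h hd
  obtain ⟨p', hp'⟩ := exists_isPath_cons h' hd'
  have path_eq : p.cons h = p'.cons h' := (hG.existsUnique_path u r).unique hp hp'
  simpa using congrArg SimpleGraph.Walk.snd path_eq

variable (G r u) in
/-- The parent of `u` in the tree `G` rooted at `r`: the neighbour of `u` one step closer to `r`.
The root has no parent, and `treeParent G r r` is a junk value. -/
noncomputable def treeParent : V :=
  @Classical.epsilon V ⟨u⟩ fun w ↦ G.Adj u w ∧ G.dist r u = G.dist r w + 1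

theorem adj_treeParent (hG : G.Connected) (hu : u ≠ r) : G.Adj u (treeParent G r u) :=
  (Classical.epsilon_spec (exists_adj_dist_eq_dist_add_one hG hu)).1

theorem dist_treeParent_add_one (hG : G.Connected) (hu : u ≠ r) :
    G.dist r (treeParent G r u) + 1 = G.dist r u :=
  (Classical.epsilon_spec (exists_adj_dist_eq_dist_add_one hG hu)).2.symm

theorem treeParent_eq_of_adj (hG : G.IsTree) (h : G.Adj u w)
    (hd : G.dist r u = G.dist r w + 1) : treeParent G r u = w := by
  have hu : u ≠ r := ne_of_dist_eq_add_one hd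
  exact eq_of_adj_of_dist_eq_dist_add_one hG (adj_treeParent hG.connected hu)
    (dist_treeParent_add_one hG.connected hu).symm h hd

variable [G.LocallyFinite]

variable (G r u) in
/-- The children of `u` in the tree `G` rooted at `r`: the neighbours of `u` one step farther
from `r`. -/
noncomputable def treeChildren : Finset V :=
  {w ∈ G.neighborFinset u | G.dist r w = G.dist r u + 1}

theorem mem_treeChildren : w ∈ treeChildren G r u ↔ G.Adj u w ∧ G.dist r w = G.dist r u + 1 := by
  rw [treeChildren, mem_filter, SimpleGraph.mem_neighborFinset]

theorem mem_treeChildren_iff_treeParent_eq (hG : G.IsTree) :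
    w ∈ treeChildren G r u ↔ G.dist r w = G.dist r u + 1 ∧ treeParent G r w = u := by
  rw [mem_treeChildren, and_comm]
  refine and_congr_right fun hd ↦ ⟨fun h ↦ treeParent_eq_of_adj hG h.symm hd, ?_⟩
  rintro rfl
  exact (adj_treeParent hG.connected (ne_of_dist_eq_add_one hd)).symm

theorem treeChildren_self : treeChildren G r r = G.neighborFinset r := by
  ext w
  simp [mem_treeChildren]

theorem sum_neighborFinset_eq_treeParent_add_sum_treeChildren {M : Type*} [AddCommMonoid M]
    (hG : G.IsTree) (hu : u ≠ r) (f : V → M) :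
    ∑ w ∈ G.neighborFinset u, f w = f (treeParent G r u) + ∑ w ∈ treeChildren G r u, f w := by
  classical
  have neighborFinset_eq : G.neighborFinset u = insert (treeParent G r u) (treeChildren G r u) := by
    ext w
    rw [mem_insert, mem_treeChildren, SimpleGraph.mem_neighborFinset]
    constructor
    · intro h
      rcases hG.dist_eq_dist_add_one_of_adj r h with hd | hd
      · exact .inl (treeParent_eq_of_adj hG h hd).symm
      · exact .inr ⟨h, hd⟩
    · rintro (rfl | ⟨h, -⟩)
      exacts [adj_treeParent hG.connected hu, h]
  have treeParent_notMem : treeParent G r u ∉ treeChildren G r u := by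
    rw [mem_treeChildren, ← dist_treeParent_add_one hG.connected hu]
    lia
  rw [neighborFinset_eq, sum_insert treeParent_notMem]

theorem degree_eq_card_treeChildren_add_one (hG : G.IsTree) (hu : u ≠ r) :
    G.degree u = #(treeChildren G r u) + 1 := by
  have card_eq := sum_neighborFinset_eq_treeParent_add_sum_treeChildren hG hu fun _ ↦ (1 : ℕ)
  rwa [← card_eq_sum_ones, ← card_eq_sum_ones, SimpleGraph.card_neighborFinset_eq_degree,
    add_comm] at card_eq

theorem expect_neighborFinset_eq_treeParent_add_expect_treeChildren {K : Type*} [Field K]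
    [CharZero K] (hG : G.IsTree) (hu : u ≠ r) {q : ℕ} (hq : G.degree u = q + 1) (f : V → K) :
    𝔼 w ∈ G.neighborFinset u, f w =
      (q + 1 : K)⁻¹ * f (treeParent G r u) +
        (q / (q + 1) : K) * 𝔼 w ∈ treeChildren G r u, f w := by
  have card_eq : #(treeChildren G r u) = q := by
    have := degree_eq_card_treeChildren_add_one hG hu
    lia
  rw [expect_eq_sum_div_card, sum_neighborFinset_eq_treeParent_add_sum_treeChildren hG hu,
    SimpleGraph.card_neighborFinset_eq_degree, hq, ← card_mul_expect, card_eq, Nat.cast_succ]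
  ring

end RootedTree

namespace SemiHomTree

variable {qp qm : ℕ} {V : Type} (T : SemiHomTree qp qm V) {u u' v : V} {n : ℕ}

theorem isTree : T.G.IsTree := ⟨T.connected, T.acyclic⟩

noncomputable instance : T.G.LocallyFinite := fun v ↦ (T.nbr_finite v).fintype

/-- The number `q_{ε(v)}`, one less than the degree of `v`. -/
def branching (v : V) : ℕ := if T.eps v then qp else qm

theorem degree_eq_branching_add_one (v : V) : T.G.degree v = T.branching v + 1 := by
  have degree_eq_ncard : T.G.degree v = {w | T.G.Adj v w}.ncard := by
    rw [← SimpleGraph.card_neighborFinset_eq_degree, ← Set.ncard_coe_finset,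
      SimpleGraph.coe_neighborFinset]
    rfl
  rw [degree_eq_ncard, branching]
  split_ifs with h
  · exact T.degree_plus v h
  · exact T.degree_minus v (Bool.eq_false_of_not_eq_true h)

theorem eps_eq_xor_bodd_length {v w : V} (p : T.G.Walk v w) :
    T.eps w = (T.eps v ^^ p.length.bodd) := by
  induction p with
  | nil => simp
  | cons h p ih => simp [ih, T.adj_parity h]

theorem eps_eq_xor_bodd_dist (v w : V) : T.eps w = (T.eps v ^^ (T.G.dist v w).bodd) := by
  obtain ⟨p, hp⟩ := T.connected.exists_walk_length_eq_dist v w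
  rw [← hp, T.eps_eq_xor_bodd_length p]

theorem branching_eq_of_dist_eq (h : T.G.dist v u = T.G.dist v u') :
    T.branching u = T.branching u' := by
  rw [branching, branching, T.eps_eq_xor_bodd_dist v u, h, ← T.eps_eq_xor_bodd_dist v u']

theorem branching_eq_ite_of_dist_eq (hv : T.eps v = true) (hu : T.G.dist v u = n) :
    T.branching u = if n % 2 = 0 then qp else qm := by
  rw [branching, T.eps_eq_xor_bodd_dist v u, hv, hu, Nat.mod_two_of_bodd]
  cases n.bodd <;> rfl

theorem card_treeChildren_eq_of_dist_eq (h : T.G.dist v u = T.G.dist v u') :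
    #(treeChildren T.G v u) = #(treeChildren T.G v u') := by
  by_cases hu : u = v
  · have hu' : u' = v := by
      rw [hu, SimpleGraph.dist_self, eq_comm, T.connected.dist_eq_zero_iff] at h
      exact h.symm
    rw [hu, hu']
  · have hu' : u' ≠ v := by
      rintro rfl
      rw [SimpleGraph.dist_self, T.connected.dist_eq_zero_iff] at h
      exact hu h.symm
    have card_eq := degree_eq_card_treeChildren_add_one T.isTree hu
    have card_eq' := degree_eq_card_treeChildren_add_one T.isTree hu'
    rw [degree_eq_branching_add_one] at card_eq card_eq'
    have := T.branching_eq_of_dist_eq h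
    lia

theorem exists_dist_eq (hqp : qp ≠ 0) (hqm : qm ≠ 0) (v : V) (n : ℕ) :
    ∃ u, T.G.dist v u = n := by
  induction n with
  | zero => exact ⟨v, SimpleGraph.dist_self⟩
  | succ n ih =>
    obtain ⟨u, rfl⟩ := ih
    have branching_ne_zero : T.branching u ≠ 0 := by
      rw [branching]
      split_ifs <;> assumption
    have degree_eq := T.degree_eq_branching_add_one u
    have card_pos : 0 < #(treeChildren T.G v u) := by
      by_cases hu : u = v
      · rw [hu, treeChildren_self, SimpleGraph.card_neighborFinset_eq_degree, ← hu]
        lia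
      · have := degree_eq_card_treeChildren_add_one T.isTree hu
        lia
    obtain ⟨w, hw⟩ := Finset.card_pos.1 card_pos
    exact ⟨w, (mem_treeChildren.1 hw).2⟩

/-- The sphere of radius `n` around `v`, as a finset. -/
noncomputable def sphere (v : V) (n : ℕ) : Finset V := (T.sphere_finite v n).toFinset

theorem mem_sphere : u ∈ T.sphere v n ↔ T.G.dist v u = n :=
  (T.sphere_finite v n).mem_toFinset

theorem Mop_eq_expect_sphere (n : ℕ) (f : V → ℂ) (v : V) :
    Mop T n f v = 𝔼 w ∈ T.sphere v n, f w := by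
  rw [Mop, finsum_mem_eq_finite_toFinset_sum _ (T.sphere_finite v n),
    Set.ncard_eq_toFinset_card _ (T.sphere_finite v n), expect_eq_sum_div_card, sphere,
    inv_mul_eq_div]

theorem sphere_one (u : V) : T.sphere u 1 = T.G.neighborFinset u := by
  ext w
  rw [mem_sphere, SimpleGraph.dist_eq_one_iff_adj, SimpleGraph.mem_neighborFinset]

theorem mapsTo_treeParent_sphere (v : V) (n : ℕ) :
    Set.MapsTo (treeParent T.G v) (T.sphere v (n + 1)) (T.sphere v n) := by
  intro w hw
  rw [mem_coe, mem_sphere] at hw ⊢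
  have := dist_treeParent_add_one T.connected (ne_of_dist_eq_add_one hw)
  lia

theorem filter_sphere_treeParent_eq [DecidableEq V] (hu : u ∈ T.sphere v n) :
    {w ∈ T.sphere v (n + 1) | treeParent T.G v w = u} = treeChildren T.G v u := by
  ext w
  rw [mem_filter, mem_sphere, mem_treeChildren_iff_treeParent_eq T.isTree, T.mem_sphere.1 hu]

theorem card_filter_sphere_treeParent_eq [DecidableEq V] (hu : u ∈ T.sphere v n) :
    ∀ u' ∈ T.sphere v n,
      #{w ∈ T.sphere v (n + 1) | treeParent T.G v w = u'} = #(treeChildren T.G v u) := by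
  intro u' hu'
  rw [T.filter_sphere_treeParent_eq hu']
  exact T.card_treeChildren_eq_of_dist_eq ((T.mem_sphere.1 hu').trans (T.mem_sphere.1 hu).symm)

theorem expect_sphere_treeParent {M : Type*} [AddCommMonoid M] [Module ℚ≥0 M]
    (hS : (T.sphere v (n + 1)).Nonempty) (f : V → M) :
    𝔼 w ∈ T.sphere v (n + 1), f (treeParent T.G v w) = 𝔼 u ∈ T.sphere v n, f u := by
  classical
  obtain ⟨w, hw⟩ := hS
  have maps := T.mapsTo_treeParent_sphere v n
  exact expect_comp_of_card_fiber_eq maps (T.card_filter_sphere_treeParent_eq (maps hw)) ⟨w, hw⟩ f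

theorem expect_sphere_expect_treeChildren {M : Type*} [AddCommMonoid M] [Module ℚ≥0 M]
    (hS : (T.sphere v n).Nonempty) (f : V → M) :
    𝔼 u ∈ T.sphere v n, 𝔼 w ∈ treeChildren T.G v u, f w = 𝔼 w ∈ T.sphere v (n + 1), f w := by
  classical
  obtain ⟨u, hu⟩ := hS
  rw [← expect_expect_fiber_of_card_fiber_eq (T.mapsTo_treeParent_sphere v n)
    (T.card_filter_sphere_treeParent_eq hu)]
  exact expect_congr rfl fun u' hu' ↦ by rw [T.filter_sphere_treeParent_eq hu']

theorem Mop_one_eq_treeParent_add_expect_treeChildren (hu : u ≠ v) (f : V → ℂ) :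
    Mop T 1 f u = (T.branching u + 1 : ℂ)⁻¹ * f (treeParent T.G v u) +
      (T.branching u / (T.branching u + 1) : ℂ) * 𝔼 w ∈ treeChildren T.G v u, f w := by
  rw [Mop_eq_expect_sphere, sphere_one]
  exact expect_neighborFinset_eq_treeParent_add_expect_treeChildren T.isTree hu
    (T.degree_eq_branching_add_one u) f

end SemiHomTree

theorem stmt_7_general {qp qm : ℕ} {V : Type} (T : SemiHomTree qp qm V) (f : V → ℂ) {v u : V}
    {n : ℕ} (hn : 1 ≤ n) (hu : T.G.dist v u = n) :
    Mop T n (fun w => Mop T 1 f w) v =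
      ((T.branching u : ℂ) + 1)⁻¹ * Mop T (n - 1) f v +
        ((T.branching u : ℂ) / ((T.branching u : ℂ) + 1)) * Mop T (n + 1) f v := by
  obtain ⟨m, rfl⟩ := Nat.exists_eq_add_of_le' hn
  have hS : (T.sphere v (m + 1)).Nonempty := ⟨u, T.mem_sphere.2 hu⟩
  have Mop_one_eq : ∀ w ∈ T.sphere v (m + 1), Mop T 1 f w =
      (T.branching u + 1 : ℂ)⁻¹ * f (treeParent T.G v w) +
        (T.branching u / (T.branching u + 1) : ℂ) * 𝔼 x ∈ treeChildren T.G v w, f x := by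
    intro w hw
    rw [T.mem_sphere] at hw
    rw [T.branching_eq_of_dist_eq (hu.trans hw.symm)]
    exact T.Mop_one_eq_treeParent_add_expect_treeChildren (ne_of_dist_eq_add_one hw) f
  simp only [T.Mop_eq_expect_sphere (m + 1), T.Mop_eq_expect_sphere (m + 1 - 1),
    T.Mop_eq_expect_sphere (m + 1 + 1)]
  rw [expect_congr rfl Mop_one_eq, expect_add_distrib, ← mul_expect, ← mul_expect,
    T.expect_sphere_treeParent hS, T.expect_sphere_expect_treeChildren hS, Nat.add_sub_cancel]

theorem stmt_7 {qp qm : ℕ} (hqp : 2 ≤ qp) (hqm : 2 ≤ qm) {V : Type}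
    (T : SemiHomTree qp qm V) (v0 : V) (hv0 : T.eps v0 = true)
    (f : V → ℂ) (v : V) (hv : T.eps v = true) (n : ℕ) (hn : 1 ≤ n) :
    Mop T n (fun u => Mop T 1 f u) v =
      (((if n % 2 = 0 then qp else qm : ℕ) : ℂ) + 1)⁻¹ * Mop T (n - 1) f v +
        (((if n % 2 = 0 then qp else qm : ℕ) : ℂ) /
            (((if n % 2 = 0 then qp else qm : ℕ) : ℂ) + 1)) * Mop T (n + 1) f v := by
  obtain ⟨u, hu⟩ := T.exists_dist_eq (by lia) (by lia) v n
  simpa only [T.branching_eq_ite_of_dist_eq hv hu] using stmt_7_general T f hn hu
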